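/- If G and G' are connected graphs whose distance matrices have the same characteristic polynomial, and G is a complete k-partite graph K_{n_1,...,n_k} with k ≥ 2, then G' is isomorphic to G. In other words, complete multipartite graphs are determined by their distance spectra. -/

import Mathlib

open Polynomial

/-!
Let `D` be the distance matrix of a connected graph. The matrix `D + 2` has diagonal entries `2`,
so testing it against `e_u - e_v` shows that it is positive semidefinite only if all distances are
at most two and nonadjacent vertices have equal columns, that is, only if nonadjacency is an
equivalence relation. Conversely, for a complete multipartite graph `D + 2` is pulled back along
the part map from the positive definite matrix `1 + J`. Being complete multipartite is thus visible
in the spectrum.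

For parts of sizes `m i`, the nonzero eigenvalues of `D + 2` are those of `(1 + J) * diagonal m`,
whose characteristic polynomial is `(k + 1) * q - X * q'` with `q = ∏ i, (X - m i)`. This operation
scales the coefficient of `X ^ j` by `k + 1 - j ≠ 0`, so `q`, and with it the part sizes, can be
recovered.
-/

section PolarDerivative

variable {R : Type*} [CommRing R]

/-- The polar derivative `n p - X p'` of a polynomial with respect to the origin, where `p` is
regarded as having formal degree `n`. -/
noncomputable def polarDerivative (n : ℕ) (p : R[X]) : R[X] :=
  (n : R[X]) * p - X * derivative p

lemma coeff_polarDerivative (n : ℕ) (p : R[X]) (j : ℕ) :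
    (polarDerivative n p).coeff j = (n - j) * p.coeff j := by
  cases j with
  | zero => simp [polarDerivative]
  | succ j =>
    rw [polarDerivative, coeff_sub, coeff_natCast_mul, coeff_X_mul, coeff_derivative]
    push_cast
    ring

lemma eq_of_polarDerivative_eq [NoZeroDivisors R] [CharZero R] {n : ℕ} {p q : R[X]}
    (hp : p.natDegree < n) (hq : q.natDegree < n)
    (h : polarDerivative n p = polarDerivative n q) : p = q := by
  ext j
  obtain hj | hj := lt_or_ge j n
  · have hcoeff := congrArg (coeff · j) h
    simp only [coeff_polarDerivative] at hcoeff
    exact mul_left_cancel₀ (sub_ne_zero.mpr (Nat.cast_injective.ne hj.ne')) hcoeff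
  · rw [coeff_eq_zero_of_natDegree_lt (hp.trans_le hj),
      coeff_eq_zero_of_natDegree_lt (hq.trans_le hj)]

lemma sum_C_mul_prod_erase_X_sub_C {ι : Type*} [Fintype ι] [DecidableEq ι] (m : ι → R) :
    ∑ i, C (m i) * ∏ j ∈ Finset.univ.erase i, (X - C (m j)) =
      X * derivative (∏ i, (X - C (m i))) -
        (Fintype.card ι : R[X]) * ∏ i, (X - C (m i)) := by
  have hterm (i : ι) : C (m i) * ∏ j ∈ Finset.univ.erase i, (X - C (m j)) =
      X * ∏ j ∈ Finset.univ.erase i, (X - C (m j)) - ∏ j, (X - C (m j)) := by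
    rw [← Finset.mul_prod_erase Finset.univ _ (Finset.mem_univ i)]
    ring
  simp [hterm, derivative_prod_finset, Finset.mul_sum]

lemma eq_and_eq_of_X_pow_mul_eq {p q : R[X]} {a b : ℕ} (hp : p.coeff 0 ≠ 0) (hq : q.coeff 0 ≠ 0)
    (h : X ^ a * p = X ^ b * q) : a = b ∧ p = q := by
  have hdeg {r : R[X]} (hr : r.coeff 0 ≠ 0) (n : ℕ) : (X ^ n * r).natTrailingDegree = n := by
    rw [X_pow_mul, natTrailingDegree_mul_X_pow (by rintro rfl; simp at hr),
      natTrailingDegree_eq_zero.mpr (.inr hr), zero_add]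
  obtain rfl : a = b := by rw [← hdeg hp a, h, hdeg hq]
  exact ⟨rfl, (isRegular_X_pow a).left h⟩

end PolarDerivative

section Determinant

open Matrix

variable {R ι : Type*} [CommRing R] [Fintype ι] [DecidableEq ι]

lemma det_diagonal_add_vecMulVec_of_isUnit {d : ι → R} (hd : ∀ i, IsUnit (d i)) (u v : ι → R) :
    (diagonal d + vecMulVec u v).det =
      ∏ i, d i + ∑ i, u i * v i * ∏ j ∈ Finset.univ.erase i, d j := by
  lift d to ι → Rˣ using hd
  have hfactor : diagonal (fun i => (d i : R)) + vecMulVec u v =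
      diagonal (fun i => (d i : R)) * (1 + replicateCol Unit (fun i => ↑(d i)⁻¹ * u i) *
        replicateRow Unit v) := by
    rw [← vecMulVec_eq, mul_add, mul_one]
    ext i j
    simp [vecMulVec_apply, diagonal_mul, mul_assoc]
  rw [hfactor, det_mul, det_diagonal, det_one_add_replicateCol_mul_replicateRow, mul_add, mul_one,
    dotProduct, Finset.mul_sum]
  congr 1
  refine Finset.sum_congr rfl fun i _ => ?_
  rw [← Finset.mul_prod_erase Finset.univ _ (Finset.mem_univ i)]
  linear_combination (u i * v i * ∏ j ∈ Finset.univ.erase i, (d j : R)) * (d i).mul_inv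

-- Over `R[X]` the entries `X + d i` are monic, hence invertible after localization; put `X = 0`.
lemma det_diagonal_add_vecMulVec (d u v : ι → R) :
    (diagonal d + vecMulVec u v).det =
      ∏ i, d i + ∑ i, u i * v i * ∏ j ∈ Finset.univ.erase i, d j := by
  have hgeneric : (diagonal (fun i => X + C (d i)) +
        vecMulVec (fun i => C (u i)) (fun i => C (v i))).det =
      ∏ i, (X + C (d i)) +
        ∑ i, C (u i) * C (v i) * ∏ j ∈ Finset.univ.erase i, (X + C (d j)) := by
    let φ := algebraMap R[X] (FractionRing R[X])
    apply IsFractionRing.injective R[X] (FractionRing R[X])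
    have hunit (i : ι) : IsUnit (φ (X + C (d i))) :=
      IsLocalization.map_units _ ⟨_, (monic_X_add_C (d i)).mem_nonZeroDivisors⟩
    have hφ := det_diagonal_add_vecMulVec_of_isUnit hunit (φ ∘ C ∘ u) (φ ∘ C ∘ v)
    convert hφ using 1
    · rw [RingHom.map_det]
      congr 1
      ext i j
      by_cases hij : i = j <;> simp [φ, vecMulVec_apply, hij]
    · simp [φ]
  have heval := congrArg (evalRingHom 0) hgeneric
  rw [RingHom.map_det] at heval
  convert heval using 1
  · congr 1
    ext i j
    by_cases hij : i = j <;> simp [vecMulVec_apply, hij]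
  · simp [eval_finsetSum, eval_prod]

lemma charpoly_diagonal_add_vecMulVec (d u v : ι → R) :
    (diagonal d + vecMulVec u v).charpoly =
      ∏ i, (X - C (d i)) -
        ∑ i, C (u i * v i) * ∏ j ∈ Finset.univ.erase i, (X - C (d j)) := by
  have hcharmatrix : (diagonal d + vecMulVec u v).charmatrix =
      diagonal (fun i => X - C (d i)) + vecMulVec (fun i => -C (u i)) (fun i => C (v i)) := by
    ext i j : 1
    obtain rfl | hij := eq_or_ne i j
    · simp only [charmatrix_apply_eq, Matrix.add_apply, diagonal_apply_eq, vecMulVec_apply, map_add,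
        map_mul]
      ring
    · simp [vecMulVec_apply, hij]
  rw [charpoly, hcharmatrix, det_diagonal_add_vecMulVec]
  simp [sub_eq_add_neg]

lemma charpoly_diagonal_add_vecMulVec_one (m : ι → R) :
    (diagonal m + vecMulVec 1 m).charpoly =
      polarDerivative (Fintype.card ι + 1) (∏ i, (X - C (m i))) := by
  rw [charpoly_diagonal_add_vecMulVec]
  simp only [Pi.one_apply, one_mul]
  rw [sum_C_mul_prod_erase_X_sub_C, polarDerivative]
  push_cast
  ring

lemma coeff_zero_charpoly_diagonal_add_vecMulVec_one_ne_zero [IsDomain R] [CharZero R]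
    {m : ι → R} (hm : ∀ i, m i ≠ 0) : (diagonal m + vecMulVec 1 m).charpoly.coeff 0 ≠ 0 := by
  rw [charpoly_diagonal_add_vecMulVec_one, coeff_polarDerivative, coeff_zero_prod]
  refine mul_ne_zero (by simpa using Nat.cast_add_one_ne_zero _) (Finset.prod_ne_zero_iff.mpr ?_)
  simpa using hm

lemma roots_charpoly_diagonal [IsDomain R] (m : ι → R) :
    (diagonal m).charpoly.roots = Finset.univ.val.map m := by
  rw [charpoly_diagonal, Finset.prod_eq_multiset_prod, ← Function.comp_def (X - C ·) m,
    ← Multiset.map_map, roots_multiset_prod_X_sub_C]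

lemma map_univ_eq_of_charpoly_diagonal_add_vecMulVec_one_eq [IsDomain R] [CharZero R]
    {ι' : Type*} [Fintype ι'] [DecidableEq ι'] {m : ι → R} {m' : ι' → R}
    (h : (diagonal m + vecMulVec 1 m).charpoly = (diagonal m' + vecMulVec 1 m').charpoly) :
    Finset.univ.val.map m = Finset.univ.val.map m' := by
  have hcard : Fintype.card ι = Fintype.card ι' := by simpa using congrArg natDegree h
  have hdiag : (diagonal m).charpoly = (diagonal m').charpoly := by
    simp only [charpoly_diagonal_add_vecMulVec_one, ← charpoly_diagonal, hcard] at h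
    exact eq_of_polarDerivative_eq (by simp [hcard]) (by simp) h
  rw [← roots_charpoly_diagonal, hdiag, roots_charpoly_diagonal]

lemma charpoly_add_scalar (A : Matrix ι ι R) (c : R) :
    (A + scalar ι c).charpoly = A.charpoly.comp (X - C c) := by
  simpa [sub_eq_add_neg] using charpoly_sub_scalar A (-c)

end Determinant

section Fibers

open Matrix

variable {V V' ι : Type*}

/-- The number of elements of `V` that `P` maps to `i`; the size of the `i`-th part when `P` is
the part map of a complete multipartite graph. -/
noncomputable def fiberCard (P : V → ι) (i : ι) : ℕ :=
  Nat.card {v // P v = i}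

lemma fiberCard_ne_zero [Finite V] {P : V → ι} (hP : P.Surjective) (i : ι) : fiberCard P i ≠ 0 := by
  obtain ⟨v, hv⟩ := hP i
  have : Nonempty {v // P v = i} := ⟨⟨v, hv⟩⟩
  exact Nat.card_pos.ne'

lemma count_map_univ_eq_fiberCard [Fintype V] [DecidableEq ι] (P : V → ι) (i : ι) :
    (Finset.univ.val.map P).count i = fiberCard P i := by
  rw [fiberCard, Nat.card_eq_fintype_card, Fintype.card_subtype, Multiset.count_map]
  simp [Finset.card, eq_comm]

lemma exists_equiv_comp_eq_of_fiberCard_eq [Finite V] [Finite V'] {P : V → ι} {P' : V' → ι}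
    (h : ∀ i, fiberCard P i = fiberCard P' i) : ∃ e : V ≃ V', ∀ v, P' (e v) = P v :=
  ⟨Equiv.ofFiberEquiv fun i => (Finite.card_eq.mp (h i)).some, Equiv.ofFiberEquiv_map _⟩

lemma exists_equiv_equiv_of_map_fiberCard_eq {ι' : Type*} [Finite V] [Finite V'] [Fintype ι]
    [Fintype ι'] {P : V → ι} {P' : V' → ι'}
    (h : Finset.univ.val.map (fiberCard P) = Finset.univ.val.map (fiberCard P')) :
    ∃ (e : V ≃ V') (s : ι ≃ ι'), ∀ v, P' (e v) = s (P v) := by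
  obtain ⟨s, hs⟩ : ∃ s : ι ≃ ι', ∀ i, fiberCard P' (s i) = fiberCard P i :=
    exists_equiv_comp_eq_of_fiberCard_eq fun n => by
      rw [← count_map_univ_eq_fiberCard, h, count_map_univ_eq_fiberCard]
  obtain ⟨e, he⟩ : ∃ e : V ≃ V', ∀ v, P' (e v) = s (P v) :=
    exists_equiv_comp_eq_of_fiberCard_eq (s.forall_congr_right.mp fun i => by
      rw [hs]; simp [fiberCard])
  exact ⟨e, s, he⟩

variable {R : Type*} [CommRing R] [Fintype V] [DecidableEq V] [Fintype ι] [DecidableEq ι]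

lemma X_pow_mul_charpoly_submatrix (A : Matrix ι ι R) (P : V → ι) :
    X ^ Fintype.card ι * (A.submatrix P P).charpoly =
      X ^ Fintype.card V * (A * diagonal fun i => (fiberCard P i : R)).charpoly := by
  let S : Matrix V ι R := (1 : Matrix ι ι R).submatrix P id
  have hsubmatrix : A.submatrix P P = S * (A * Sᵀ) := by
    ext u v
    simp [S, Matrix.mul_apply, Matrix.one_apply]
  have hgram : Sᵀ * S = diagonal fun i => (fiberCard P i : R) := by
    ext i j
    obtain rfl | hij := eq_or_ne i j
    · simp [S, Matrix.mul_apply, Matrix.one_apply, fiberCard, Fintype.card_subtype,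
        eq_comm (a := i), ← ite_and]
    · rw [diagonal_apply_ne _ hij, Matrix.mul_apply]
      refine Finset.sum_eq_zero fun v _ => ?_
      by_cases hv : P v = i <;> simp [S, Matrix.one_apply, hv, hij]
  rw [hsubmatrix, charpoly_mul_comm', Matrix.mul_assoc, hgram]

end Fibers

section PosSemidef

open Matrix
open scoped ComplexOrder

variable {n 𝕜 : Type*} [RCLike 𝕜] {A : Matrix n n 𝕜}

lemma posSemidef_iff_forall_roots_charpoly_nonneg [Fintype n] [DecidableEq n] (hA : A.IsHermitian) :
    A.PosSemidef ↔ ∀ z ∈ A.charpoly.roots, 0 ≤ z := by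
  rw [hA.posSemidef_iff_eigenvalues_nonneg, hA.roots_charpoly_eq_eigenvalues]
  simp [Pi.le_def]

lemma posSemidef_iff_posSemidef_of_charpoly_eq {m : Type*} [Fintype n] [DecidableEq n]
    [Fintype m] [DecidableEq m] {B : Matrix m m 𝕜} (hA : A.IsHermitian) (hB : B.IsHermitian)
    (h : A.charpoly = B.charpoly) :
    A.PosSemidef ↔ B.PosSemidef := by
  rw [posSemidef_iff_forall_roots_charpoly_nonneg hA, h,
    posSemidef_iff_forall_roots_charpoly_nonneg hB]

lemma star_single_sub_single_dotProduct_mulVec [Fintype n] [DecidableEq n] (A : Matrix n n 𝕜)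
    (u v : n) :
    star (Pi.single u 1 - Pi.single v 1) ⬝ᵥ (A *ᵥ (Pi.single u 1 - Pi.single v 1)) =
      A u u + A v v - (A u v + A v u) := by
  simp only [mulVec_sub, mulVec_single_one, star_sub, Pi.star_single, star_one, sub_dotProduct,
    dotProduct_sub, single_one_dotProduct, col_apply]
  ring

lemma apply_add_apply_le_of_posSemidef [Finite n] (hA : A.PosSemidef) (u v : n) :
    A u v + A v u ≤ A u u + A v v := by
  classical
  cases nonempty_fintype n
  rw [← sub_nonneg, ← star_single_sub_single_dotProduct_mulVec]
  exact hA.dotProduct_mulVec_nonneg _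

lemma apply_eq_apply_of_posSemidef [Finite n] (hA : A.PosSemidef) {u v : n}
    (h : A u v + A v u = A u u + A v v) (w : n) : A w u = A w v := by
  classical
  cases nonempty_fintype n
  have hker : A *ᵥ (Pi.single u 1 - Pi.single v 1) = 0 := by
    rw [← hA.dotProduct_mulVec_zero_iff, star_single_sub_single_dotProduct_mulVec, h, sub_self]
  simpa [mulVec_sub, sub_eq_zero] using congrFun hker w

end PosSemidef

section PartMatrix

open Matrix

variable {V V' ι ι' : Type*} [DecidableEq ι] [DecidableEq ι']

/-- The matrix with entry `2` at two vertices of the same part and `1` at two vertices of different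
parts, where `P` is the part map. It is `D + 2` for the distance matrix `D` of the corresponding
complete multipartite graph. -/
def partMatrix (P : V → ι) : Matrix V V ℝ :=
  (1 + vecMulVec 1 1 : Matrix ι ι ℝ).submatrix P P

lemma partMatrix_apply (P : V → ι) (u v : V) :
    partMatrix P u v = if P u = P v then 2 else 1 := by
  by_cases h : P u = P v
  · norm_num [partMatrix, h]
  · simp [partMatrix, h]

lemma posSemidef_partMatrix [Finite ι] (P : V → ι) : (partMatrix P).PosSemidef :=
  (PosSemidef.one.add (posSemidef_vecMulVec_self_star 1)).submatrix P

variable [Fintype V] [DecidableEq V] [Fintype V'] [DecidableEq V'] [Fintype ι] [Fintype ι']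

lemma X_pow_mul_charpoly_partMatrix (P : V → ι) :
    X ^ Fintype.card ι * (partMatrix P).charpoly = X ^ Fintype.card V *
      (diagonal (fun i => (fiberCard P i : ℝ)) +
        vecMulVec 1 (fun i => (fiberCard P i : ℝ))).charpoly := by
  rw [partMatrix, X_pow_mul_charpoly_submatrix, Matrix.add_mul, Matrix.one_mul, vecMulVec_mul]
  congr 4
  ext i
  simp [vecMul_diagonal]

lemma map_fiberCard_eq_of_charpoly_partMatrix_eq {P : V → ι} {P' : V' → ι'}
    (hP : P.Surjective) (hP' : P'.Surjective)
    (h : (partMatrix P).charpoly = (partMatrix P').charpoly) :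
    Finset.univ.val.map (fiberCard P) = Finset.univ.val.map (fiberCard P') := by
  let m (i : ι) : ℝ := fiberCard P i
  let m' (i : ι') : ℝ := fiberCard P' i
  have hcard : Fintype.card V = Fintype.card V' := by simpa using congrArg natDegree h
  have hquot : X ^ (Fintype.card ι' + Fintype.card V) * (diagonal m + vecMulVec 1 m).charpoly =
      X ^ (Fintype.card ι + Fintype.card V) * (diagonal m' + vecMulVec 1 m').charpoly := by
    rw [pow_add, mul_assoc, ← X_pow_mul_charpoly_partMatrix, pow_add, mul_assoc, hcard,
      ← X_pow_mul_charpoly_partMatrix, h, mul_left_comm]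
  have hm : ∀ i, m i ≠ 0 := fun i => Nat.cast_ne_zero.mpr (fiberCard_ne_zero hP i)
  have hm' : ∀ i, m' i ≠ 0 := fun i => Nat.cast_ne_zero.mpr (fiberCard_ne_zero hP' i)
  have hmap : Finset.univ.val.map m = Finset.univ.val.map m' :=
    map_univ_eq_of_charpoly_diagonal_add_vecMulVec_one_eq
      (eq_and_eq_of_X_pow_mul_eq (coeff_zero_charpoly_diagonal_add_vecMulVec_one_ne_zero hm)
        (coeff_zero_charpoly_diagonal_add_vecMulVec_one_ne_zero hm') hquot).2
  apply Multiset.map_injective (Nat.cast_injective (R := ℝ))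
  rw [Multiset.map_map, Multiset.map_map]
  exact hmap

end PartMatrix

section CompleteMultipartite

variable {V ι : Type*} {G : SimpleGraph V}

lemma isCompleteMultipartite_of_adj_iff_ne {P : V → ι} (hadj : ∀ u v, G.Adj u v ↔ P u ≠ P v) :
    G.IsCompleteMultipartite :=
  ⟨fun u v w huv hvw => by simp_all⟩

lemma adj_iff_quotientMk_ne (h : G.IsCompleteMultipartite) (u v : V) :
    G.Adj u v ↔ Quotient.mk h.setoid u ≠ Quotient.mk h.setoid v := by
  rw [ne_eq, Quotient.eq]
  exact not_not.symm

lemma dist_le_two_of_isCompleteMultipartite (hG : G.Connected) (hmulti : G.IsCompleteMultipartite)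
    (u v : V) : G.dist u v ≤ 2 := by
  obtain rfl | huv := eq_or_ne u v
  · simp
  by_cases hadj : G.Adj u v
  · simp [SimpleGraph.dist_eq_one_iff_adj.mpr hadj]
  have : Nontrivial V := ⟨u, v, huv⟩
  obtain ⟨w, huw⟩ := hG.preconnected.exists_adj_of_nontrivial u
  have hwv : G.Adj w v := by
    by_contra hwv
    exact hmulti.trans u v w hadj (fun h => hwv h.symm) huw
  exact SimpleGraph.dist_le (.cons huw (.cons hwv .nil))

end CompleteMultipartite

section DistanceMatrix

open Matrix

variable {V ι : Type*} [Fintype V] [DecidableEq V] {G : SimpleGraph V}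

/-- The matrix `D + 2`, where `D` is the distance matrix of `G`; the shift turns the condition that
the least distance eigenvalue is at least `-2` into positive semidefiniteness. -/
noncomputable def shiftedDistMatrix (G : SimpleGraph V) : Matrix V V ℝ :=
  Matrix.of (fun u v => (G.dist u v : ℝ)) + scalar V 2

lemma isHermitian_shiftedDistMatrix (G : SimpleGraph V) : (shiftedDistMatrix G).IsHermitian := by
  refine .add ?_ ?_
  · ext u v
    simp [SimpleGraph.dist_comm]
  · simp

lemma shiftedDistMatrix_self (G : SimpleGraph V) (v : V) : shiftedDistMatrix G v v = 2 := by
  simp [shiftedDistMatrix]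

lemma shiftedDistMatrix_of_ne {u v : V} (huv : u ≠ v) :
    shiftedDistMatrix G u v = G.dist u v := by
  simp [shiftedDistMatrix, huv]

lemma shiftedDistMatrix_of_adj {u v : V} (h : G.Adj u v) : shiftedDistMatrix G u v = 1 := by
  simp [shiftedDistMatrix_of_ne h.ne, SimpleGraph.dist_eq_one_iff_adj.mpr h]

lemma shiftedDistMatrix_of_not_adj (hG : G.Connected) (hdist : ∀ u v, G.dist u v ≤ 2)
    {u v : V} (h : ¬ G.Adj u v) : shiftedDistMatrix G u v = 2 := by
  obtain rfl | huv := eq_or_ne u v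
  · exact shiftedDistMatrix_self G u
  · have htwo : G.dist u v = 2 := (hdist u v).antisymm (hG.one_lt_dist_of_ne_of_not_adj huv h)
    simp [shiftedDistMatrix_of_ne huv, htwo]

lemma dist_le_two_of_posSemidef (hpsd : (shiftedDistMatrix G).PosSemidef) (u v : V) :
    G.dist u v ≤ 2 := by
  obtain rfl | huv := eq_or_ne u v
  · simp
  have hentries := apply_add_apply_le_of_posSemidef hpsd u v
  rw [shiftedDistMatrix_self, shiftedDistMatrix_self, shiftedDistMatrix_of_ne huv,
    shiftedDistMatrix_of_ne huv.symm, G.dist_comm (u := v)] at hentries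
  norm_cast at hentries
  lia

lemma isCompleteMultipartite_of_posSemidef (hG : G.Connected)
    (hpsd : (shiftedDistMatrix G).PosSemidef) : G.IsCompleteMultipartite := by
  have hnot_adj {u v : V} (h : ¬ G.Adj u v) : shiftedDistMatrix G u v = 2 :=
    shiftedDistMatrix_of_not_adj hG (dist_le_two_of_posSemidef hpsd) h
  refine ⟨fun u v w huv hvw huw => ?_⟩
  have hcol : shiftedDistMatrix G u v = shiftedDistMatrix G u w := by
    refine apply_eq_apply_of_posSemidef hpsd ?_ u
    simp [hnot_adj hvw, hnot_adj fun h => hvw h.symm, shiftedDistMatrix_self]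
  rw [hnot_adj huv, shiftedDistMatrix_of_adj huw] at hcol
  norm_num at hcol

lemma shiftedDistMatrix_eq_partMatrix [DecidableEq ι] (hG : G.Connected) {P : V → ι}
    (hadj : ∀ u v, G.Adj u v ↔ P u ≠ P v) : shiftedDistMatrix G = partMatrix P := by
  have hdist := dist_le_two_of_isCompleteMultipartite hG (isCompleteMultipartite_of_adj_iff_ne hadj)
  ext u v
  rw [partMatrix_apply]
  split_ifs with h
  · exact shiftedDistMatrix_of_not_adj hG hdist (by simpa [hadj] using h)
  · exact shiftedDistMatrix_of_adj ((hadj u v).mpr h)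

lemma posSemidef_shiftedDistMatrix_iff (hG : G.Connected) :
    (shiftedDistMatrix G).PosSemidef ↔ G.IsCompleteMultipartite := by
  classical
  refine ⟨isCompleteMultipartite_of_posSemidef hG, fun hmulti => ?_⟩
  rw [shiftedDistMatrix_eq_partMatrix hG (adj_iff_quotientMk_ne hmulti)]
  exact posSemidef_partMatrix _

end DistanceMatrix

/-- Complete multipartite graphs are determined by their distance spectra: if `G` is
complete `k`-partite (`k ≥ 2`) and `G'` is a connected graph whose distance matrix has
the same characteristic polynomial, then `G' ≅ G`. -/
theorem completeMultipartite_determined_by_distance_spectrum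
    {V V' : Type*} [Fintype V] [DecidableEq V] [Fintype V'] [DecidableEq V']
    (G : SimpleGraph V) (G' : SimpleGraph V') (hG : G.Connected) (hG' : G'.Connected)
    (k : ℕ) (hk : 2 ≤ k) (P : V → Fin k) (hP : Function.Surjective P)
    (hadj : ∀ u v, G.Adj u v ↔ P u ≠ P v)
    (hspec : (Matrix.of fun u v => (G.dist u v : ℝ)).charpoly =
      (Matrix.of fun u v => (G'.dist u v : ℝ)).charpoly) :
    Nonempty (G ≃g G') := by
  classical
  have hshift : (shiftedDistMatrix G).charpoly = (shiftedDistMatrix G').charpoly := by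
    rw [shiftedDistMatrix, shiftedDistMatrix, charpoly_add_scalar, charpoly_add_scalar, hspec]
  have hmulti' : G'.IsCompleteMultipartite := by
    rw [← posSemidef_shiftedDistMatrix_iff hG', ← posSemidef_iff_posSemidef_of_charpoly_eq
      (isHermitian_shiftedDistMatrix G) (isHermitian_shiftedDistMatrix G') hshift,
      posSemidef_shiftedDistMatrix_iff hG]
    exact isCompleteMultipartite_of_adj_iff_ne hadj
  have hadj' := adj_iff_quotientMk_ne hmulti'
  rw [shiftedDistMatrix_eq_partMatrix hG hadj, shiftedDistMatrix_eq_partMatrix hG' hadj'] at hshift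
  obtain ⟨e, s, hes⟩ := exists_equiv_equiv_of_map_fiberCard_eq
    (map_fiberCard_eq_of_charpoly_partMatrix_eq hP Quotient.mk_surjective hshift)
  exact ⟨e, by simp [hadj, hadj', hes]⟩
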